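/- Let C be a quasicategory, B a simplicial set, and D: B → C a map of simplicial sets (a diagram in C indexed by B). Then the overcategory C_{/D}, whose n-simplices are the maps Δ[n] ⋆ B → C restricting to D on B, is a quasicategory. -/

import Mathlib

open CategoryTheory Opposite

namespace SSetPaper

universe u

/-- `Vec A k` is the type of "`k`-vertex simplices" of `A`: a point if `k = 0`, and the
`(k-1)`-simplices of `A` otherwise. -/
def Vec (A : SSet.{u}) : ℕ → Type u
  | 0 => PUnit
  | m + 1 => A.obj (op (SimplexCategory.mk m))

/-- Functoriality of `Vec` in the simplicial set. -/
def VecMap {A A' : SSet.{u}} (g : A ⟶ A') : ∀ (k : ℕ), Vec A k → Vec A' k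
  | 0, _ => PUnit.unit
  | m + 1, α => g.app (op (SimplexCategory.mk m)) α

/-- Functoriality of `Vec` in the number of vertices: a monotone map `Fin j → Fin k`
induces a restriction map `Vec A k → Vec A j`. -/
def VecMapHom (A : SSet.{u}) : ∀ {j k : ℕ}, (Fin j →o Fin k) → Vec A k → Vec A j
  | 0, _, _, _ => PUnit.unit
  | _ + 1, 0, v, _ => (v 0).elim0
  | _ + 1, _ + 1, v, α => A.map (SimplexCategory.mkHom v).op α

lemma VecMap_id (A : SSet.{u}) : ∀ (k : ℕ) (α : Vec A k), VecMap (𝟙 A) k α = α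
  | 0, PUnit.unit => rfl
  | _ + 1, _ => rfl

lemma VecMap_comp {A A' A'' : SSet.{u}} (g : A ⟶ A') (g' : A' ⟶ A'') :
    ∀ (k : ℕ) (α : Vec A k), VecMap (g ≫ g') k α = VecMap g' k (VecMap g k α)
  | 0, _ => rfl
  | _ + 1, _ => rfl

lemma VecMapHom_vecMap {A A' : SSet.{u}} (g : A ⟶ A') :
    ∀ {j k : ℕ} (v : Fin j →o Fin k) (α : Vec A k),
      VecMapHom A' v (VecMap g k α) = VecMap g j (VecMapHom A v α)
  | 0, _, _, _ => rfl
  | _ + 1, 0, v, _ => (v 0).elim0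
  | _ + 1, _ + 1, v, α => (NatTrans.naturality_apply g (SimplexCategory.mkHom v).op α).symm

/-- The number of vertices of `y` sent by `u : y ⟶ x` into the first `k` vertices
of `x`. -/
def cutIdx {y x : SimplexCategory} (u : y ⟶ x) (k : ℕ) : ℕ :=
  (Finset.univ.filter fun i : Fin (y.len + 1) => (u.toOrderHom i : ℕ) < k).card

lemma cutIdx_le {y x : SimplexCategory} (u : y ⟶ x) (k : ℕ) : cutIdx u k ≤ y.len + 1 := by
  have := Finset.card_filter_le (Finset.univ : Finset (Fin (y.len + 1)))
    (fun i => (u.toOrderHom i : ℕ) < k)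
  simpa [cutIdx] using this

lemma lt_cutIdx_iff {y x : SimplexCategory} (u : y ⟶ x) (k : ℕ) (i : Fin (y.len + 1)) :
    (i : ℕ) < cutIdx u k ↔ (u.toOrderHom i : ℕ) < k := by
  constructor
  · intro h
    by_contra hn
    have hsub : (Finset.univ.filter fun j : Fin (y.len + 1) => (u.toOrderHom j : ℕ) < k)
        ⊆ Finset.Iio i := by
      intro j hj
      rw [Finset.mem_filter] at hj
      rw [Finset.mem_Iio]
      by_contra hji
      push_neg at hji
      have hmono : (u.toOrderHom i : ℕ) ≤ (u.toOrderHom j : ℕ) := u.toOrderHom.monotone hji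
      exact hn (lt_of_le_of_lt hmono hj.2)
    have hcard := Finset.card_le_card hsub
    rw [Fin.card_Iio] at hcard
    unfold cutIdx at h
    omega
  · intro h
    have hsub : Finset.Iic i
        ⊆ Finset.univ.filter fun j : Fin (y.len + 1) => (u.toOrderHom j : ℕ) < k := by
      intro j hj
      rw [Finset.mem_Iic] at hj
      rw [Finset.mem_filter]
      refine ⟨Finset.mem_univ _, ?_⟩
      have hmono : (u.toOrderHom j : ℕ) ≤ (u.toOrderHom i : ℕ) := u.toOrderHom.monotone hj
      omega
    have hcard := Finset.card_le_card hsub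
    rw [Fin.card_Iic] at hcard
    unfold cutIdx
    omega

/-- The restriction monotone map on the initial part induced by `u : y ⟶ x`. -/
def cutA {y x : SimplexCategory} (u : y ⟶ x) (k : ℕ) : Fin (cutIdx u k) →o Fin k where
  toFun i := ⟨(u.toOrderHom ⟨(i : ℕ), lt_of_lt_of_le i.isLt (cutIdx_le u k)⟩ : ℕ),
    (lt_cutIdx_iff u k _).mp i.isLt⟩
  monotone' i i' h := by
    have : (u.toOrderHom ⟨(i : ℕ), lt_of_lt_of_le i.isLt (cutIdx_le u k)⟩ : ℕ)
        ≤ (u.toOrderHom ⟨(i' : ℕ), lt_of_lt_of_le i'.isLt (cutIdx_le u k)⟩ : ℕ) :=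
      u.toOrderHom.monotone h
    exact this

/-- The restriction monotone map on the final part induced by `u : y ⟶ x`. -/
def cutB {y x : SimplexCategory} (u : y ⟶ x) (k : ℕ) :
    Fin (y.len + 1 - cutIdx u k) →o Fin (x.len + 1 - k) where
  toFun j :=
    ⟨(u.toOrderHom ⟨(j : ℕ) + cutIdx u k, by
        have h1 := j.isLt
        have h2 := cutIdx_le u k
        omega⟩ : ℕ) - k, by
      have h1 : ¬ ((j : ℕ) + cutIdx u k < cutIdx u k) := by omega
      have h2 : ¬ ((u.toOrderHom ⟨(j : ℕ) + cutIdx u k, by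
          have := j.isLt; have := cutIdx_le u k; omega⟩ : ℕ) < k) :=
        fun hh => h1 ((lt_cutIdx_iff u k _).mpr hh)
      have h3 := (u.toOrderHom ⟨(j : ℕ) + cutIdx u k, by
          have := j.isLt; have := cutIdx_le u k; omega⟩).isLt
      omega⟩
  monotone' j j' h := by
    have hmono : (u.toOrderHom ⟨(j : ℕ) + cutIdx u k, by
          have := j.isLt; have := cutIdx_le u k; omega⟩ : ℕ)
        ≤ (u.toOrderHom ⟨(j' : ℕ) + cutIdx u k, by
          have := j'.isLt; have := cutIdx_le u k; omega⟩ : ℕ) := by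
      refine u.toOrderHom.monotone ?_
      show (j : ℕ) + cutIdx u k ≤ (j' : ℕ) + cutIdx u k
      have : (j : ℕ) ≤ (j' : ℕ) := h
      omega
    exact Nat.sub_le_sub_right hmono k


lemma vecMapHom_congr_heq {A : SSet.{u}} {j j' k k' : ℕ} (hj : j = j') (hk : k = k')
    (v : Fin j →o Fin k) (v' : Fin j' →o Fin k')
    (hv : ∀ (i : ℕ) (h1 : i < j) (h2 : i < j'), (v ⟨i, h1⟩ : ℕ) = (v' ⟨i, h2⟩ : ℕ))
    {α : Vec A k} {α' : Vec A k'} (hα : HEq α α') :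
    HEq (VecMapHom A v α) (VecMapHom A v' α') := by
  subst hj; subst hk
  obtain rfl : α = α' := eq_of_heq hα
  obtain rfl : v = v' := by
    apply OrderHom.ext
    funext i
    exact Fin.ext (hv i i.isLt i.isLt)
  rfl

lemma vecMapHom_id_heq {A : SSet.{u}} {j k : ℕ} (hjk : j = k) (v : Fin j →o Fin k)
    (hv : ∀ i : Fin j, (v i : ℕ) = i) (α : Vec A k) : HEq (VecMapHom A v α) α := by
  subst hjk
  obtain rfl : v = OrderHom.id := by
    apply OrderHom.ext
    funext i
    exact Fin.ext (hv i)
  refine heq_of_eq ?_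
  cases j with
  | zero =>
      exact Subsingleton.elim (α := PUnit) _ _
  | succ m =>
      show A.map (SimplexCategory.mkHom OrderHom.id).op α = α
      rw [show SimplexCategory.mkHom (OrderHom.id : Fin (m+1) →o Fin (m+1))
          = 𝟙 (SimplexCategory.mk m) from rfl, op_id]
      exact ConcreteCategory.congr_hom (A.map_id (op (SimplexCategory.mk m))) α

lemma vecMapHom_trans {A : SSet.{u}} : ∀ {j k l : ℕ} (v : Fin j →o Fin k) (w : Fin k →o Fin l)
    (α : Vec A l), VecMapHom A (w.comp v) α = VecMapHom A v (VecMapHom A w α)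
  | 0, _, _, _, _, _ => rfl
  | _ + 1, 0, _, v, _, _ => (v 0).elim0
  | _ + 1, _ + 1, 0, _, w, _ => (w 0).elim0
  | j + 1, k + 1, l + 1, v, w, α => by
      show A.map (SimplexCategory.mkHom (w.comp v)).op α = _
      rw [show SimplexCategory.mkHom (w.comp v)
          = SimplexCategory.mkHom v ≫ SimplexCategory.mkHom w from rfl, op_comp]
      exact ConcreteCategory.congr_hom
        (A.map_comp (SimplexCategory.mkHom w).op (SimplexCategory.mkHom v).op) α

lemma cutIdx_id {x : SimplexCategory} (k : ℕ) (hk : k ≤ x.len + 1) : cutIdx (𝟙 x) k = k := by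
  have hle := cutIdx_le (𝟙 x) k
  by_contra hne
  rcases Nat.lt_or_ge (cutIdx (𝟙 x) k) k with h | h
  · have hcc : cutIdx (𝟙 x) k < cutIdx (𝟙 x) k :=
      (lt_cutIdx_iff (𝟙 x) k ⟨cutIdx (𝟙 x) k, by omega⟩).mpr h
    omega
  · have hklt : k < x.len + 1 := by omega
    have hkk : k < k :=
      (lt_cutIdx_iff (𝟙 x) k ⟨k, hklt⟩).mp (show k < cutIdx (𝟙 x) k by omega)
    omega

lemma nat_eq_of_lt_iff {c1 c2 N : ℕ} (h1 : c1 ≤ N) (h2 : c2 ≤ N)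
    (h : ∀ i < N, (i < c1 ↔ i < c2)) : c1 = c2 := by
  rcases Nat.lt_trichotomy c1 c2 with hlt | he | hlt
  · have := (h c1 (by omega)).mpr hlt
    omega
  · exact he
  · have := (h c2 (by omega)).mp hlt
    omega

lemma cutIdx_comp {z y x : SimplexCategory} (v : z ⟶ y) (u : y ⟶ x) (k : ℕ) :
    cutIdx (v ≫ u) k = cutIdx v (cutIdx u k) := by
  refine nat_eq_of_lt_iff (N := z.len + 1) (cutIdx_le _ _) (cutIdx_le _ _) ?_
  intro i hi
  have e1 := lt_cutIdx_iff (v ≫ u) k ⟨i, hi⟩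
  have e2 := lt_cutIdx_iff u k (v.toOrderHom ⟨i, hi⟩)
  have e3 := lt_cutIdx_iff v (cutIdx u k) ⟨i, hi⟩
  constructor
  · intro h
    have ha1 : ((v ≫ u).toOrderHom ⟨i, hi⟩ : ℕ) < k := e1.mp h
    have ha2 : ((v.toOrderHom ⟨i, hi⟩ : ℕ)) < cutIdx u k := e2.mpr ha1
    exact e3.mpr ha2
  · intro h
    exact e1.mpr (e2.mp (e3.mp h))

lemma join_simplex_ext {A B : SSet.{u}} {n : ℕ}
    {p q : Σ k : Fin (n + 2), Vec A (k : ℕ) × Vec B (n + 1 - (k : ℕ))}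
    (h1 : (p.1 : ℕ) = (q.1 : ℕ)) (h2 : HEq p.2.1 q.2.1) (h3 : HEq p.2.2 q.2.2) : p = q := by
  obtain ⟨⟨k, hk⟩, α, β⟩ := p
  obtain ⟨⟨k', hk'⟩, α', β'⟩ := q
  dsimp only at h1 h2 h3
  subst h1
  obtain rfl : α = α' := eq_of_heq h2
  obtain rfl : β = β' := eq_of_heq h3
  rfl


lemma cutB_apply {y x : SimplexCategory} (u : y ⟶ x) (K : ℕ) (j : Fin (y.len + 1 - cutIdx u K)) :
    ((cutB u K) j : ℕ)
      = (u.toOrderHom ⟨(j : ℕ) + cutIdx u K,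
          by have := j.isLt; have := cutIdx_le u K; omega⟩ : ℕ) - K := rfl

lemma vec_punit_heq {A : SSet.{u}} {j : ℕ} (h : j = 0) (w : Vec A 0) (z : Vec A j) :
    HEq w z := by
  subst h
  exact heq_of_eq (Subsingleton.elim (α := PUnit) _ _)

lemma orderHom_val_congr {N M : ℕ} (w : Fin N →o Fin M) {p q : Fin N} (h : (p : ℕ) = q) :
    (w p : ℕ) = w q :=
  congrArg (fun z => (w z : ℕ)) (Fin.ext h)

lemma cutB_comp_val {z y x : SimplexCategory} (v : z ⟶ y) (u : y ⟶ x) (K : ℕ) (i : ℕ)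
    (h1 : i < z.len + 1 - cutIdx (v ≫ u) K)
    (h2 : i < z.len + 1 - cutIdx v (cutIdx u K)) :
    ((cutB (v ≫ u) K) ⟨i, h1⟩ : ℕ)
      = (((cutB u K).comp (cutB v (cutIdx u K))) ⟨i, h2⟩ : ℕ) := by
  have hC := cutIdx_comp v u K
  have pfA1 : i + cutIdx (v ≫ u) K < z.len + 1 := by
    have := cutIdx_le (v ≫ u) K; omega
  have pfA2 : i + cutIdx v (cutIdx u K) < z.len + 1 := by
    have := cutIdx_le v (cutIdx u K); omega
  have pfin := (v.toOrderHom ⟨i + cutIdx v (cutIdx u K), pfA2⟩).isLt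
  have hnotlt : ¬ ((v.toOrderHom ⟨i + cutIdx v (cutIdx u K), pfA2⟩ : ℕ) < cutIdx u K) := by
    intro hh
    have hcon : i + cutIdx v (cutIdx u K) < cutIdx v (cutIdx u K) :=
      (lt_cutIdx_iff v (cutIdx u K) _).mpr hh
    omega
  have pfB : ((v.toOrderHom ⟨i + cutIdx v (cutIdx u K), pfA2⟩ : ℕ) - cutIdx u K)
      + cutIdx u K < y.len + 1 := by omega
  calc ((cutB (v ≫ u) K) ⟨i, h1⟩ : ℕ)
      = ((v ≫ u).toOrderHom ⟨i + cutIdx (v ≫ u) K, pfA1⟩ : ℕ) - K := rfl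
    _ = ((v ≫ u).toOrderHom ⟨i + cutIdx v (cutIdx u K), pfA2⟩ : ℕ) - K :=
        congrArg (fun t => t - K)
          (orderHom_val_congr ((v ≫ u).toOrderHom)
            (p := ⟨i + cutIdx (v ≫ u) K, pfA1⟩)
            (q := ⟨i + cutIdx v (cutIdx u K), pfA2⟩)
            (show i + cutIdx (v ≫ u) K = i + cutIdx v (cutIdx u K) by omega))
    _ = (u.toOrderHom (v.toOrderHom ⟨i + cutIdx v (cutIdx u K), pfA2⟩) : ℕ) - K := rfl
    _ = (u.toOrderHom ⟨((v.toOrderHom ⟨i + cutIdx v (cutIdx u K), pfA2⟩ : ℕ) - cutIdx u K)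
          + cutIdx u K, pfB⟩ : ℕ) - K :=
        congrArg (fun t => t - K)
          (orderHom_val_congr (u.toOrderHom)
            (p := v.toOrderHom ⟨i + cutIdx v (cutIdx u K), pfA2⟩)
            (q := ⟨((v.toOrderHom ⟨i + cutIdx v (cutIdx u K), pfA2⟩ : ℕ) - cutIdx u K)
              + cutIdx u K, pfB⟩)
            (show (v.toOrderHom ⟨i + cutIdx v (cutIdx u K), pfA2⟩ : ℕ)
                = ((v.toOrderHom ⟨i + cutIdx v (cutIdx u K), pfA2⟩ : ℕ) - cutIdx u K)
                  + cutIdx u K by omega))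
    _ = (((cutB u K).comp (cutB v (cutIdx u K))) ⟨i, h2⟩ : ℕ) := rfl

/-- The join `A ⋆ B` of two simplicial sets.  An `n`-simplex is a decomposition of
`{0, …, n}` into an initial segment with `k` vertices and a final segment with `n+1-k`
vertices, together with a simplex of `A` on the initial segment and a simplex of `B` on
the final segment (one of which may be empty). -/
def Join (A B : SSet.{u}) : SSet.{u} where
  obj a := Σ k : Fin (a.unop.len + 2), Vec A (k : ℕ) × Vec B (a.unop.len + 1 - (k : ℕ))
  map {a b} f := TypeCat.ofHom fun p =>
    ⟨⟨cutIdx f.unop (p.1 : ℕ), by have := cutIdx_le f.unop (p.1 : ℕ); omega⟩,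
      VecMapHom A (cutA f.unop (p.1 : ℕ)) p.2.1,
      VecMapHom B (cutB f.unop (p.1 : ℕ)) p.2.2⟩
  map_id a := by
    refine ConcreteCategory.hom_ext _ _ fun p => ?_
    obtain ⟨k, α, β⟩ := p
    refine join_simplex_ext ?_ ?_ ?_
    · exact cutIdx_id (k : ℕ) (by have := k.isLt; omega)
    · exact vecMapHom_id_heq (cutIdx_id (k : ℕ) (by have := k.isLt; omega)) _ (fun _ => rfl) α
    · refine vecMapHom_id_heq ?_ _ ?_ β
      · show a.unop.len + 1 - cutIdx (𝟙 a.unop) (k : ℕ) = a.unop.len + 1 - (k : ℕ)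
        have h1 := cutIdx_id (x := a.unop) (k : ℕ) (by have := k.isLt; omega)
        omega
      · intro j
        show ((j : ℕ) + cutIdx (𝟙 a.unop) (k : ℕ)) - (k : ℕ) = (j : ℕ)
        have h1 := cutIdx_id (x := a.unop) (k : ℕ) (by have := k.isLt; omega)
        have h2 := j.isLt
        omega
  map_comp {a b c} f g := by
    refine ConcreteCategory.hom_ext _ _ fun p => ?_
    obtain ⟨k, α, β⟩ := p
    refine join_simplex_ext ?_ ?_ ?_
    · exact cutIdx_comp g.unop f.unop (k : ℕ)
    · refine HEq.trans (vecMapHom_congr_heq (cutIdx_comp g.unop f.unop (k : ℕ)) rfl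
        (cutA ((f ≫ g).unop) (k : ℕ))
        ((cutA f.unop (k : ℕ)).comp (cutA g.unop (cutIdx f.unop (k : ℕ))))
        (fun _ _ _ => rfl) HEq.rfl) (heq_of_eq (vecMapHom_trans _ _ _))
    · refine HEq.trans (vecMapHom_congr_heq ?_ rfl
        (cutB ((f ≫ g).unop) (k : ℕ))
        ((cutB f.unop (k : ℕ)).comp (cutB g.unop (cutIdx f.unop (k : ℕ))))
        ?_ HEq.rfl) (heq_of_eq (vecMapHom_trans _ _ _))
      · have hC := cutIdx_comp g.unop f.unop (k : ℕ)
        show c.unop.len + 1 - cutIdx (g.unop ≫ f.unop) (k : ℕ)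
            = c.unop.len + 1 - cutIdx g.unop (cutIdx f.unop (k : ℕ))
        omega
      · intro i hh1 hh2
        exact cutB_comp_val g.unop f.unop (k : ℕ) i hh1 hh2

/-- The join construction is functorial in the first argument. -/
def joinMapL {A A' : SSet.{u}} (g : A ⟶ A') (B : SSet.{u}) : Join A B ⟶ Join A' B where
  app a := TypeCat.ofHom fun p => ⟨p.1, VecMap g (p.1 : ℕ) p.2.1, p.2.2⟩
  naturality a b f := by
    refine ConcreteCategory.hom_ext _ _ fun p => ?_
    exact congrArg
      (fun z => (⟨⟨cutIdx f.unop (p.1 : ℕ), by have := cutIdx_le f.unop (p.1 : ℕ); omega⟩, z,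
        VecMapHom B (cutB f.unop (p.1 : ℕ)) p.2.2⟩ :
          Σ k : Fin (b.unop.len + 2), Vec A' (k : ℕ) × Vec B (b.unop.len + 1 - (k : ℕ))))
      (VecMapHom_vecMap g (cutA f.unop (p.1 : ℕ)) p.2.1) |>.symm

/-- The inclusion `B ⟶ A ⋆ B` of the second factor of a join. -/
def joinInclR (A B : SSet.{u}) : B ⟶ Join A B where
  app a := TypeCat.ofHom fun β => ⟨⟨0, by omega⟩, PUnit.unit, β⟩
  naturality a b f := by
    refine ConcreteCategory.hom_ext _ _ fun β => ?_
    have hc : cutIdx f.unop 0 = 0 := by simp [cutIdx]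
    refine join_simplex_ext hc.symm (vec_punit_heq hc _ _) ?_
    show HEq (VecMapHom B (SimplexCategory.Hom.toOrderHom f.unop) β)
      (VecMapHom B (cutB f.unop 0) β)
    refine vecMapHom_congr_heq (by omega) rfl _ _ ?_ HEq.rfl
    intro i h1 h2
    have pf1 : i + cutIdx f.unop 0 < b.unop.len + 1 := by
      have := cutIdx_le f.unop 0; omega
    calc ((SimplexCategory.Hom.toOrderHom f.unop) ⟨i, h1⟩ : ℕ)
        = ((SimplexCategory.Hom.toOrderHom f.unop) ⟨i + cutIdx f.unop 0, pf1⟩ : ℕ) :=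
          orderHom_val_congr _ (show (i : ℕ) = i + cutIdx f.unop 0 by omega)
      _ = ((SimplexCategory.Hom.toOrderHom f.unop) ⟨i + cutIdx f.unop 0, pf1⟩ : ℕ) - 0 := by
          omega
      _ = ((cutB f.unop 0) ⟨i, h2⟩ : ℕ) := rfl

lemma joinInclR_joinMapL {A A' B : SSet.{u}} (g : A ⟶ A') :
    joinInclR A B ≫ joinMapL g B = joinInclR A' B := by
  apply NatTrans.ext
  funext a
  refine ConcreteCategory.hom_ext _ _ fun β => ?_
  rfl

lemma joinMapL_id (A B : SSet.{u}) : joinMapL (𝟙 A) B = 𝟙 (Join A B) := by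
  apply NatTrans.ext
  funext a
  refine ConcreteCategory.hom_ext _ _ fun p => ?_
  show (⟨p.1, VecMap (𝟙 A) (p.1 : ℕ) p.2.1, p.2.2⟩ :
      Σ k : Fin (a.unop.len + 2), Vec A (k : ℕ) × Vec B (a.unop.len + 1 - (k : ℕ))) = p
  obtain ⟨k, α, β⟩ := p
  rw [VecMap_id]

lemma joinMapL_comp {A A' A'' : SSet.{u}} (g : A ⟶ A') (g' : A' ⟶ A'') (B : SSet.{u}) :
    joinMapL (g ≫ g') B = joinMapL g B ≫ joinMapL g' B := by
  apply NatTrans.ext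
  funext a
  refine ConcreteCategory.hom_ext _ _ fun p => ?_
  show (⟨p.1, VecMap (g ≫ g') (p.1 : ℕ) p.2.1, p.2.2⟩ :
      Σ k : Fin (a.unop.len + 2), Vec A'' (k : ℕ) × Vec B (a.unop.len + 1 - (k : ℕ)))
    = ⟨p.1, VecMap g' _ (VecMap g (p.1 : ℕ) p.2.1), p.2.2⟩
  rw [VecMap_comp]

/-- The overcategory `C_{/D}` of a diagram `D : B ⟶ C`: its `n`-simplices are the maps of
simplicial sets `Δ[n] ⋆ B ⟶ C` whose restriction along `B ⊆ Δ[n] ⋆ B` is `D`. -/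
def Overcategory (C B : SSet.{u}) (D : B ⟶ C) : SSet.{u} where
  obj a := { F : Join (SSet.stdSimplex.obj a.unop) B ⟶ C //
      joinInclR (SSet.stdSimplex.obj a.unop) B ≫ F = D }
  map {a b} f := TypeCat.ofHom fun F => ⟨joinMapL (SSet.stdSimplex.map f.unop) B ≫ F.1, by
    rw [← Category.assoc, joinInclR_joinMapL, F.2]⟩
  map_id a := by
    refine ConcreteCategory.hom_ext _ _ fun F => ?_
    apply Subtype.ext
    show joinMapL (SSet.stdSimplex.map (𝟙 a).unop) B ≫ F.1 = F.1
    rw [unop_id, show SSet.stdSimplex.map (𝟙 a.unop) = 𝟙 (SSet.stdSimplex.obj a.unop) from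
      CategoryTheory.Functor.map_id _ _, joinMapL_id, Category.id_comp]
  map_comp {a b c} f g := by
    refine ConcreteCategory.hom_ext _ _ fun F => ?_
    apply Subtype.ext
    show joinMapL (SSet.stdSimplex.map (f ≫ g).unop) B ≫ F.1
        = joinMapL (SSet.stdSimplex.map g.unop) B ≫
            joinMapL (SSet.stdSimplex.map f.unop) B ≫ F.1
    rw [unop_comp, show SSet.stdSimplex.map (g.unop ≫ f.unop)
        = SSet.stdSimplex.map g.unop ≫ SSet.stdSimplex.map f.unop from
      CategoryTheory.Functor.map_comp _ _ _, joinMapL_comp, Category.assoc]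

end SSetPaper

/-!
A map `K ⟶ C_{/D}` is the same thing as a map `K ⋆ B ⟶ C` under `B`. Extending along `A ⊆ X` in
`C_{/D}` is therefore extending along `A ⋆ B ⟶ X ⋆ B` in `C`, for which it suffices that the latter
be inner anodyne. A regular inner pairing on `A ⊆ X` (in the sense of Moss) induces one on
`A ⋆ B ⊆ X ⋆ B`: pair `(x, b)` with `(d_i x, b)` whenever `x` is paired with `d_i x`, for every
nondegenerate, possibly empty simplex `b` of `B`. An ancestor of `(x, b)` either has a smaller
`b`, or the same `b` and an ancestor of `x`, so regularity is a lexicographic induction. For an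
inner horn, pair the top simplex with its missing face.
-/

namespace SSetPaper

open Simplicial

universe u

variable {A A' B C K X : SSet.{u}}

section Coordinates

lemma vecMapHom_id {k : ℕ} (α : Vec A k) : VecMapHom A OrderHom.id α = α :=
  eq_of_heq (vecMapHom_id_heq rfl _ (fun _ ↦ rfl) α)

/-- The simplex `(α, β)` of `A ⋆ B`, where `α` has `k` and `β` has `m` vertices. In `Join` the
number `m` is the truncated difference `N + 1 - k`; leaving it free, with a proof of
`k + m = N + 1`, avoids casts. -/
def mkJoin {N : ℕ} (k m : ℕ) (h : k + m = N + 1) (α : Vec A k) (β : Vec B m) :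
    (Join A B).obj (op ⦋N⦌) :=
  ⟨⟨k, by dsimp; omega⟩, α, cast (congrArg (Vec B) (by dsimp; omega)) β⟩

lemma exists_mkJoin {N : ℕ} (p : (Join A B).obj (op ⦋N⦌)) :
    ∃ (k m : ℕ) (h : k + m = N + 1) (α : Vec A k) (β : Vec B m), p = mkJoin k m h α β := by
  obtain ⟨⟨k, hk⟩, α, β⟩ := p
  exact ⟨k, N + 1 - k, by dsimp at hk; omega, α, β, rfl⟩

lemma mkJoin_inj {N k m k' m' : ℕ} {h : k + m = N + 1} {h' : k' + m' = N + 1} {α : Vec A k}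
    {β : Vec B m} {α' : Vec A k'} {β' : Vec B m'} :
    mkJoin k m h α β = mkJoin k' m' h' α' β' ↔
      (⟨k, α⟩ : Σ k, Vec A k) = ⟨k', α'⟩ ∧ (⟨m, β⟩ : Σ m, Vec B m) = ⟨m', β'⟩ := by
  obtain rfl : m = N + 1 - k := by omega
  obtain rfl : m' = N + 1 - k' := by omega
  refine ⟨fun e ↦ ?_, fun ⟨hα, hβ⟩ ↦ ?_⟩
  · obtain ⟨hk, hp⟩ := Sigma.mk.inj e
    obtain rfl : k = k' := congrArg Fin.val hk
    obtain ⟨rfl, hβ⟩ := Prod.mk.inj (eq_of_heq hp)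
    exact ⟨rfl, congrArg _ hβ⟩
  · obtain ⟨rfl, hα⟩ := Sigma.mk.inj hα
    exact join_simplex_ext rfl hα (Sigma.mk.inj hβ).2

lemma joinMapL_mkJoin (g : A ⟶ A') {N k m : ℕ} (h : k + m = N + 1) (α : Vec A k)
    (β : Vec B m) :
    (joinMapL g B).app (op ⦋N⦌) (mkJoin k m h α β) = mkJoin k m h (VecMap g k α) β :=
  rfl

lemma joinHom_ext {F G : Join A B ⟶ C}
    (hFG : ∀ ⦃N k m : ℕ⦄ (h : k + m = N + 1) (α : Vec A k) (β : Vec B m),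
      F.app (op ⦋N⦌) (mkJoin k m h α β) = G.app (op ⦋N⦌) (mkJoin k m h α β)) : F = G := by
  refine SSet.hom_ext fun ⟨N⟩ ↦ ?_
  induction N using SimplexCategory.rec with | _ N
  ext p
  obtain ⟨k, m, h, α, β, rfl⟩ := exists_mkJoin p
  exact hFG h α β

lemma mk_mkJoin_eq_iff {N N' k m k' m' : ℕ} {h : k + 1 + m = N + 1} {h' : k' + 1 + m' = N' + 1}
    {x : A _⦋k⦌} {β : Vec B m} {x' : A _⦋k'⦌} {β' : Vec B m'} :
    SSet.S.mk (X := Join A B) (mkJoin (k + 1) m h x β) = SSet.S.mk (mkJoin (k' + 1) m' h' x' β') ↔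
      SSet.S.mk x = SSet.S.mk x' ∧ (⟨m, β⟩ : Σ m, Vec B m) = ⟨m', β'⟩ := by
  refine ⟨fun e ↦ ?_, fun ⟨hx, hβ⟩ ↦ ?_⟩
  · obtain rfl : N = N' := SSet.S.dim_eq_of_mk_eq e
    obtain ⟨hx, hβ⟩ := mkJoin_inj.1 ((SSet.S.ext_iff _ _).1 e)
    obtain ⟨hk, hx⟩ := Sigma.mk.inj hx
    obtain rfl : k = k' := by omega
    exact ⟨by rw [eq_of_heq hx], hβ⟩
  · obtain rfl : k = k' := SSet.S.dim_eq_of_mk_eq hx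
    obtain rfl : x = x' := (SSet.S.ext_iff _ _).1 hx
    obtain ⟨rfl, hβ⟩ := Sigma.mk.inj hβ
    obtain rfl := eq_of_heq hβ
    obtain rfl : N = N' := by omega
    rfl

end Coordinates

section OrdinalSum

/-- `u = u₁ ⊕ u₂` as maps of finite ordinals: `u` restricts to `u₁` on the first `k'` vertices,
and to `u₂`, shifted by `k`, on the remaining `m'`. -/
structure IsOrdinalSum {M N k k' m m' : ℕ} (u : ⦋M⦌ ⟶ ⦋N⦌) (u₁ : Fin k' →o Fin k)
    (u₂ : Fin m' →o Fin m) : Prop where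
  left : ∀ (i : ℕ) (hi : i < k') (hi' : i < M + 1), (u.toOrderHom ⟨i, hi'⟩ : ℕ) = u₁ ⟨i, hi⟩
  right : ∀ (i : ℕ) (hi : i < m') (hi' : i + k' < M + 1),
    (u.toOrderHom ⟨i + k', hi'⟩ : ℕ) = k + u₂ ⟨i, hi⟩

variable {M N k k' m m' : ℕ} {u : ⦋M⦌ ⟶ ⦋N⦌} {u₁ : Fin k' →o Fin k} {u₂ : Fin m' →o Fin m}

lemma isOrdinalSum_cut (u : ⦋M⦌ ⟶ ⦋N⦌) (k : ℕ) : IsOrdinalSum u (cutA u k) (cutB u k) where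
  left _ _ _ := rfl
  right i hi hi' := by
    have h := (lt_cutIdx_iff u k ⟨i + cutIdx u k, hi'⟩).not.1 (by simp)
    simp only [cutB_apply]
    omega

lemma exists_isOrdinalSum_of_hom (u : ⦋M⦌ ⟶ ⦋N⦌) (h : k + m = N + 1) :
    ∃ (k' m' : ℕ) (_ : k' + m' = M + 1) (u₁ : Fin k' →o Fin k) (u₂ : Fin m' →o Fin m),
      IsOrdinalSum u u₁ u₂ := by
  obtain rfl : m = N + 1 - k := by omega
  exact ⟨cutIdx u k, M + 1 - cutIdx u k, Nat.add_sub_cancel' (cutIdx_le u k), cutA u k,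
    cutB u k, isOrdinalSum_cut u k⟩

lemma exists_hom_isOrdinalSum (h : k + m = N + 1) (h' : k' + m' = M + 1) (u₁ : Fin k' →o Fin k)
    (u₂ : Fin m' →o Fin m) : ∃ u : ⦋M⦌ ⟶ ⦋N⦌, IsOrdinalSum u u₁ u₂ := by
  let f (i : Fin (M + 1)) : Fin (N + 1) :=
    if hi : (i : ℕ) < k' then (u₁ ⟨i, hi⟩).castLE (by omega)
    else ((u₂ ⟨i - k', by omega⟩).natAdd k).cast h
  have f_left (i : ℕ) (hi : i < k') (hi' : i < M + 1) : (f ⟨i, hi'⟩ : ℕ) = u₁ ⟨i, hi⟩ := by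
    simp [f, hi]
  have f_right (i : ℕ) (hi : i < m') (hi' : i + k' < M + 1) :
      (f ⟨i + k', hi'⟩ : ℕ) = k + u₂ ⟨i, hi⟩ := by
    simp [f]
  refine ⟨SimplexCategory.mkHom ⟨f, fun a b hab ↦ ?_⟩, f_left, f_right⟩
  have hab : (a : ℕ) ≤ b := hab
  dsimp only [f]
  split_ifs with ha hb hb
  · exact u₁.monotone (show (⟨a, ha⟩ : Fin k') ≤ ⟨b, hb⟩ from hab)
  · exact Fin.le_def.2 (by simp only [Fin.val_castLE, Fin.val_cast, Fin.val_natAdd]; omega)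
  · omega
  · have := u₂.monotone (show (⟨a - k', by omega⟩ : Fin m') ≤ ⟨b - k', by omega⟩ from
      Nat.sub_le_sub_right hab k')
    exact Fin.le_def.2 (by simpa using this)

lemma IsOrdinalSum.cutIdx_eq (hu : IsOrdinalSum u u₁ u₂) (h' : k' + m' = M + 1) :
    cutIdx u k = k' := by
  refine nat_eq_of_lt_iff (N := M + 1) (cutIdx_le _ _) (by omega) fun i hi ↦
    (lt_cutIdx_iff u k ⟨i, hi⟩).trans ?_
  by_cases hik : i < k'
  · simp [hik, hu.left i hik hi]
  · obtain ⟨j, rfl⟩ := Nat.exists_eq_add_of_le' (not_lt.1 hik)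
    simp [hu.right j (by omega) hi]

lemma map_mkJoin (h : k + m = N + 1) (h' : k' + m' = M + 1) (hu : IsOrdinalSum u u₁ u₂)
    (α : Vec A k) (β : Vec B m) :
    (Join A B).map u.op (mkJoin k m h α β) =
      mkJoin k' m' h' (VecMapHom A u₁ α) (VecMapHom B u₂ β) := by
  obtain rfl := hu.cutIdx_eq h'
  obtain rfl : m = N + 1 - k := by omega
  obtain rfl : m' = M + 1 - cutIdx u k := by omega
  obtain rfl : u₁ = cutA u k := by
    ext i
    exact (hu.left i i.isLt (by omega)).symm
  obtain rfl : u₂ = cutB u k := by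
    ext i
    have hi : i + cutIdx u k < M + 1 := by omega
    have := (hu.right i i.isLt hi).symm.trans ((isOrdinalSum_cut u k).right i i.isLt hi)
    exact Nat.add_left_cancel this
  rfl

lemma IsOrdinalSum.injective_right (hu : IsOrdinalSum u u₁ u₂) (h' : k' + m' = M + 1)
    (hinj : Function.Injective u.toOrderHom) : Function.Injective u₂ := fun i j hij ↦ by
  have := @hinj ⟨i + k', by dsimp; omega⟩ ⟨j + k', by dsimp; omega⟩ (Fin.ext (by
    rw [hu.right i i.isLt, hu.right j j.isLt]; exact congrArg (fun l : Fin m ↦ k + (l : ℕ)) hij))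
  exact Fin.ext (Nat.add_right_cancel (Fin.mk.inj this))

lemma isOrdinalSum_δ_left (i : Fin (N + 2)) (i' : Fin (k + 1)) (hi : (i : ℕ) = i') :
    IsOrdinalSum (SimplexCategory.δ i) (Fin.succAboveOrderEmb i').toOrderHom
      (OrderHom.id : Fin m →o Fin m) where
  left j hj hj' := by
    change (i.succAbove _ : ℕ) = i'.succAbove _
    simp only [Fin.succAbove, Fin.lt_def, Fin.val_castSucc, hi, apply_ite Fin.val, Fin.val_succ]
  right j hj hj' := by
    change (i.succAbove _ : ℕ) = k + 1 + j
    rw [Fin.succAbove_of_le_castSucc _ _ (Fin.le_def.2 (by simp; omega)), Fin.val_succ]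
    change j + k + 1 = k + 1 + j
    omega

lemma isOrdinalSum_δ_right (i : Fin (N + 2)) (i' : Fin (m + 1)) (hi : (i : ℕ) = k + i') :
    IsOrdinalSum (SimplexCategory.δ i) (OrderHom.id : Fin k →o Fin k)
      (Fin.succAboveOrderEmb i').toOrderHom where
  left j hj hj' := by
    change (i.succAbove _ : ℕ) = j
    rw [Fin.succAbove_of_castSucc_lt _ _ (Fin.lt_def.2 (by simp; omega)), Fin.val_castSucc]
  right j hj hj' := by
    change (i.succAbove _ : ℕ) = k + i'.succAbove _
    simp only [Fin.succAbove, Fin.lt_def, Fin.val_castSucc, hi, apply_ite Fin.val, Fin.val_succ]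
    split_ifs <;> omega

lemma δ_mkJoin_left {n k m : ℕ} (h : k + 2 + m = n + 2) (i : Fin (k + 2)) (x : A _⦋k + 1⦌)
    (β : Vec B m) :
    (Join A B).δ (i.castLE (by omega) : Fin (n + 2)) (mkJoin (k + 2) m h x β) =
      mkJoin (k + 1) m (by omega) (A.δ i x) β :=
  (map_mkJoin h _ (isOrdinalSum_δ_left _ i rfl) _ β).trans
    (congrArg (mkJoin (k + 1) m (by omega) (A.δ i x)) (vecMapHom_id β))

lemma δ_mkJoin_right {n k m : ℕ} (h : k + (m + 1) = n + 2) (i : Fin (m + 1)) (α : Vec A k)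
    (β : Vec B (m + 1)) :
    (Join A B).δ ((i.natAdd k).castLE (by omega) : Fin (n + 2)) (mkJoin k (m + 1) h α β) =
      mkJoin k m (by omega) α (VecMapHom B (Fin.succAboveOrderEmb i).toOrderHom β) :=
  (map_mkJoin h _ (isOrdinalSum_δ_right _ i rfl) _ β).trans
    (congrArg (fun α ↦ mkJoin k m (by omega) α _) (vecMapHom_id α))

end OrdinalSum

section Adjunction

variable {D : B ⟶ C}

/-- The identity of `⦋k⦌`, as a `k`-simplex of `Δ[k]`. -/
def universalSimplex (k : ℕ) : Vec (Δ[k] : SSet.{u}) (k + 1) :=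
  SSet.stdSimplex.objEquiv.symm (𝟙 ⦋k⦌)

lemma vecMap_universalSimplex {k : ℕ} (x : X _⦋k⦌) :
    VecMap (SSet.yonedaEquiv.symm x) (k + 1) (universalSimplex k) = x :=
  SSet.yonedaEquiv_symm_app_id x

/-- The map `Δ[d] ⋆ B ⟶ C` that a `d`-simplex of the overcategory consists of. -/
def overcategoryHom {d : ℕ} (F : (Overcategory C B D) _⦋d⦌) : Join Δ[d] B ⟶ C :=
  F.1

lemma joinInclR_overcategoryHom {d : ℕ} (F : (Overcategory C B D) _⦋d⦌) :
    joinInclR Δ[d] B ≫ overcategoryHom F = D :=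
  F.2

lemma overcategoryHom_map {d e : ℕ} (F : (Overcategory C B D) _⦋d⦌) (f : ⦋e⦌ ⟶ ⦋d⦌) :
    overcategoryHom ((Overcategory C B D).map f.op F) =
      joinMapL (SSet.stdSimplex.map f) B ≫ overcategoryHom F :=
  rfl

/-- The value at `(α, β)` of the map `K ⋆ B ⟶ C` under `B` adjunct to `σ`: a nonempty simplex `α`
of `K` gives a map `Δ[k] ⋆ B ⟶ C`, to be evaluated at the universal simplex of `Δ[k]`. -/
def uncurryFun (σ : K ⟶ Overcategory C B D) {N : ℕ} :
    ∀ {k m : ℕ} (_ : k + m = N + 1) (_ : Vec K k) (_ : Vec B m), C _⦋N⦌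
  | 0, m, h, _, β => D.app (op ⦋N⦌) (cast (congrArg (Vec B) (show m = N + 1 by omega)) β)
  | k + 1, m, h, α, β =>
    (overcategoryHom (σ.app (op ⦋k⦌) α)).app (op ⦋N⦌) (mkJoin (k + 1) m h (universalSimplex k) β)

lemma uncurryFun_yonedaEquiv_symm (σ : K ⟶ Overcategory C B D) {d N k m : ℕ} (x : K _⦋d⦌)
    (h : k + m = N + 1) (f : Vec Δ[d] k) (β : Vec B m) :
    uncurryFun σ h (VecMap (SSet.yonedaEquiv.symm x) k f) β =
      (overcategoryHom (σ.app (op ⦋d⦌) x)).app (op ⦋N⦌) (mkJoin k m h f β) := by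
  cases k with
  | zero =>
    obtain rfl : m = N + 1 := by omega
    exact (ConcreteCategory.congr_hom
      (NatTrans.congr_app (joinInclR_overcategoryHom (σ.app _ x)) (op ⦋N⦌)) β).symm
  | succ k =>
    obtain ⟨f, rfl⟩ := SSet.stdSimplex.objEquiv.symm.surjective f
    have hom_face : overcategoryHom (σ.app (op ⦋k⦌) (K.map f.op x)) =
        joinMapL (SSet.stdSimplex.map f) B ≫ overcategoryHom (σ.app (op ⦋d⦌) x) := by
      rw [NatTrans.naturality_apply, overcategoryHom_map]
    refine (ConcreteCategory.congr_hom (NatTrans.congr_app hom_face (op ⦋N⦌)) _).trans ?_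
    exact congrArg (fun g ↦ (overcategoryHom (σ.app (op ⦋d⦌) x)).app (op ⦋N⦌)
      (mkJoin (k + 1) m h g β)) (vecMap_universalSimplex (SSet.stdSimplex.objEquiv.symm f))

lemma map_uncurryFun (σ : K ⟶ Overcategory C B D) {M N k k' m m' : ℕ} {u : ⦋M⦌ ⟶ ⦋N⦌}
    {u₁ : Fin k' →o Fin k} {u₂ : Fin m' →o Fin m} (h : k + m = N + 1) (h' : k' + m' = M + 1)
    (hu : IsOrdinalSum u u₁ u₂) (α : Vec K k) (β : Vec B m) :
    C.map u.op (uncurryFun σ h α β) = uncurryFun σ h' (VecMapHom K u₁ α) (VecMapHom B u₂ β) := by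
  cases k with
  | zero =>
    obtain rfl : k' = 0 := Nat.eq_zero_of_not_pos fun hk ↦ (u₁ ⟨0, hk⟩).elim0
    obtain rfl : m = N + 1 := by omega
    obtain rfl : m' = M + 1 := by omega
    have hu₂ : u₂ = u.toOrderHom := by
      ext i
      exact ((hu.right i i.isLt i.isLt).trans (Nat.zero_add _)).symm
    rw [hu₂]
    exact (NatTrans.naturality_apply D u.op β).symm
  | succ k =>
    have hα := vecMap_universalSimplex (X := K) α
    calc C.map u.op (uncurryFun σ h α β)
      _ = (overcategoryHom (σ.app (op ⦋k⦌) α)).app (op ⦋M⦌)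
            (mkJoin k' m' h' (VecMapHom Δ[k] u₁ (universalSimplex k)) (VecMapHom B u₂ β)) := by
          rw [← map_mkJoin h h' hu, NatTrans.naturality_apply]
          rfl
      _ = uncurryFun σ h' (VecMap (SSet.yonedaEquiv.symm (α : K _⦋k⦌)) k'
            (VecMapHom Δ[k] u₁ (universalSimplex k))) (VecMapHom B u₂ β) :=
          (uncurryFun_yonedaEquiv_symm ..).symm
      _ = uncurryFun σ h' (VecMapHom K u₁ α) (VecMapHom B u₂ β) := by
          rw [← VecMapHom_vecMap, hα]

/-- The map `K ⋆ B ⟶ C` adjunct to `σ : K ⟶ C_{/D}`. -/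
def uncurry (σ : K ⟶ Overcategory C B D) : Join K B ⟶ C where
  app a := TypeCat.ofHom fun p ↦ uncurryFun σ (N := a.unop.len)
    (Nat.add_sub_cancel' (Nat.le_of_lt_succ p.1.isLt)) p.2.1 p.2.2
  naturality a b f := ConcreteCategory.hom_ext _ _ fun p ↦
    (map_uncurryFun σ (M := b.unop.len) (N := a.unop.len) _
      (Nat.add_sub_cancel' (cutIdx_le f.unop p.1)) (isOrdinalSum_cut f.unop p.1) _ _).symm

lemma uncurry_mkJoin (σ : K ⟶ Overcategory C B D) {N k m : ℕ} (h : k + m = N + 1)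
    (α : Vec K k) (β : Vec B m) :
    (uncurry σ).app (op ⦋N⦌) (mkJoin k m h α β) = uncurryFun σ h α β := by
  obtain rfl : m = N + 1 - k := by omega
  rfl

lemma joinInclR_uncurry (σ : K ⟶ Overcategory C B D) : joinInclR K B ≫ uncurry σ = D := by
  refine SSet.hom_ext fun _ ↦ ?_
  ext β
  rfl

/-- The map `K ⟶ C_{/D}` adjunct to a map `K ⋆ B ⟶ C` under `B`. -/
def curry (F : Join K B ⟶ C) (hF : joinInclR K B ≫ F = D) : K ⟶ Overcategory C B D where
  app a := TypeCat.ofHom fun x ↦ ⟨joinMapL (SSet.yonedaEquiv.symm x) B ≫ F, by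
    rw [← Category.assoc, joinInclR_joinMapL, hF]⟩
  naturality a b f := ConcreteCategory.hom_ext _ _ fun x ↦ Subtype.ext <| by
    change joinMapL (SSet.yonedaEquiv.symm (K.map f.unop.op x)) B ≫ F =
      joinMapL (SSet.stdSimplex.map f.unop) B ≫ joinMapL (SSet.yonedaEquiv.symm x) B ≫ F
    rw [← SSet.yonedaEquiv_symm_naturality_left, joinMapL_comp, Category.assoc]

lemma curry_uncurry (σ : K ⟶ Overcategory C B D) :
    curry (uncurry σ) (joinInclR_uncurry σ) = σ := by
  refine SSet.hom_ext fun ⟨d⟩ ↦ ?_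
  induction d using SimplexCategory.rec with | _ d
  ext x
  refine Subtype.ext (joinHom_ext fun N k m h α β ↦ ?_)
  exact (uncurry_mkJoin σ h _ β).trans (uncurryFun_yonedaEquiv_symm σ x h α β)

lemma comp_curry (i : A ⟶ K) (F : Join K B ⟶ C) (hF : joinInclR K B ≫ F = D) :
    i ≫ curry F hF = curry (joinMapL i B ≫ F) (by
      rw [← Category.assoc, joinInclR_joinMapL, hF]) := by
  refine SSet.hom_ext fun _ ↦ ?_
  ext x
  refine Subtype.ext ?_
  change joinMapL (SSet.yonedaEquiv.symm (i.app _ x)) B ≫ F =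
    joinMapL (SSet.yonedaEquiv.symm x) B ≫ joinMapL i B ≫ F
  rw [← SSet.yonedaEquiv_symm_comp, joinMapL_comp, Category.assoc]

lemma exists_comp_eq_of_innerAnodyneExtensions_joinMapL [SSet.Quasicategory C] {i : A ⟶ X}
    (hi : SSet.innerAnodyneExtensions (joinMapL i B)) (σ₀ : A ⟶ Overcategory C B D) :
    ∃ σ : X ⟶ Overcategory C B D, i ≫ σ = σ₀ := by
  have := hi _ (SSet.mem_innerFibrations (Limits.terminal.from C))
  have sq : CommSq (uncurry σ₀) (joinMapL i B) (Limits.terminal.from C) (Limits.terminal.from _) :=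
    ⟨Subsingleton.elim _ _⟩
  have lift_under : joinInclR X B ≫ sq.lift = D := by
    rw [← joinInclR_joinMapL i, Category.assoc, sq.fac_left, joinInclR_uncurry]
  refine ⟨curry sq.lift lift_under, ?_⟩
  simp only [comp_curry, sq.fac_left, curry_uncurry]

end Adjunction

section NonDegenerate

variable {M N k k' m m' : ℕ}

lemma exists_isOrdinalSum_of_map_mkJoin_eq {u : ⦋M⦌ ⟶ ⦋N⦌} {h : k + m = N + 1}
    {h' : k' + m' = M + 1} {α : Vec A k} {β : Vec B m} {α' : Vec A k'} {β' : Vec B m'}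
    (e : (Join A B).map u.op (mkJoin k m h α β) = mkJoin k' m' h' α' β') :
    ∃ (u₁ : Fin k' →o Fin k) (u₂ : Fin m' →o Fin m), IsOrdinalSum u u₁ u₂ ∧
      VecMapHom A u₁ α = α' ∧ VecMapHom B u₂ β = β' := by
  obtain ⟨l, l', hl, u₁, u₂, hu⟩ := exists_isOrdinalSum_of_hom u h
  obtain ⟨hα, hβ⟩ := mkJoin_inj.1 ((map_mkJoin h hl hu α β).symm.trans e)
  obtain ⟨rfl, hα⟩ := Sigma.mk.inj hα
  obtain ⟨rfl, hβ⟩ := Sigma.mk.inj hβ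
  exact ⟨u₁, u₂, hu, eq_of_heq hα, eq_of_heq hβ⟩

/-- Nondegeneracy of a possibly empty simplex: it is not a pullback of a simplex with fewer
vertices. -/
def VecNonDegenerate (β : Vec B m) : Prop :=
  ∀ ⦃m' : ℕ⦄ (v : Fin m →o Fin m') (γ : Vec B m'), β = VecMapHom B v γ → m ≤ m'

lemma vecNonDegenerate_succ_iff {x : B _⦋m⦌} :
    VecNonDegenerate (m := m + 1) x ↔ x ∈ B.nonDegenerate m := by
  refine ⟨fun h ⟨l, hl, f, y, e⟩ ↦ ?_, fun h l v γ e ↦ ?_⟩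
  · have := h f.toOrderHom (m' := l + 1) y e.symm
    omega
  · by_contra! hl
    cases l with
    | zero => exact (v 0).elim0
    | succ l => exact h ⟨l, by omega, SimplexCategory.mkHom v, γ, e.symm⟩

lemma vecNonDegenerate_of_mkJoin {h : k + m = N + 1} {α : Vec A k} {β : Vec B m}
    (hp : mkJoin k m h α β ∈ (Join A B).nonDegenerate N) :
    VecNonDegenerate α ∧ VecNonDegenerate β := by
  have size_le {k' m' : ℕ} (v : Fin k →o Fin k') (w : Fin m →o Fin m') (α' : Vec A k')
      (β' : Vec B m') (hα : α = VecMapHom A v α') (hβ : β = VecMapHom B w β') :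
      k + m ≤ k' + m' := by
    by_contra! hlt
    have hk' (hk : k' = 0) : k = 0 := by
      subst hk
      exact Nat.eq_zero_of_not_pos fun hk ↦ (v ⟨0, hk⟩).elim0
    have hm' (hm : m' = 0) : m = 0 := by
      subst hm
      exact Nat.eq_zero_of_not_pos fun hm ↦ (w ⟨0, hm⟩).elim0
    have h' : k' + m' = k' + m' - 1 + 1 := by omega
    obtain ⟨u, hu⟩ := exists_hom_isOrdinalSum h' h v w
    exact hp ⟨_, by omega, u, mkJoin k' m' h' α' β', by rw [map_mkJoin h' h hu, ← hα, ← hβ]⟩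
  exact ⟨fun k' v α' hα ↦ Nat.le_of_add_le_add_right
      (size_le v OrderHom.id α' β hα (vecMapHom_id β).symm),
    fun m' w β' hβ ↦ Nat.le_of_add_le_add_left
      (size_le OrderHom.id w α β' (vecMapHom_id α).symm hβ)⟩

lemma mkJoin_mem_nonDegenerate_iff {h : k + m = N + 1} {α : Vec A k} {β : Vec B m} :
    mkJoin k m h α β ∈ (Join A B).nonDegenerate N ↔ VecNonDegenerate α ∧ VecNonDegenerate β := by
  refine ⟨vecNonDegenerate_of_mkJoin, ?_⟩
  rintro ⟨hα, hβ⟩ ⟨M, hM, f, y, hy⟩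
  obtain ⟨k', m', h', α', β', rfl⟩ := exists_mkJoin y
  obtain ⟨v, w, -, rfl, rfl⟩ := exists_isOrdinalSum_of_map_mkJoin_eq hy
  have := hα v α' rfl
  have := hβ w β' rfl
  omega

end NonDegenerate

section Range

variable {N k m : ℕ}

lemma mkJoin_mem_range_joinMapL_iff {g : A ⟶ A'} {h : k + m = N + 1} {α : Vec A' k}
    {β : Vec B m} :
    mkJoin k m h α β ∈ (SSet.Subcomplex.range (joinMapL g B)).obj (op ⦋N⦌) ↔
      ∃ α', VecMap g k α' = α := by
  constructor
  · rintro ⟨p, hp⟩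
    obtain ⟨k', m', h', α', β', rfl⟩ := exists_mkJoin p
    obtain ⟨hα, -⟩ := mkJoin_inj.1 ((joinMapL_mkJoin g h' α' β').symm.trans hp)
    obtain ⟨rfl, hα⟩ := Sigma.mk.inj hα
    exact ⟨α', eq_of_heq hα⟩
  · rintro ⟨α', rfl⟩
    exact ⟨mkJoin k m h α' β, rfl⟩

lemma mkJoin_succ_mem_range_joinMapL_ι_iff {A : X.Subcomplex} {h : k + 1 + m = N + 1}
    {x : X _⦋k⦌} {β : Vec B m} :
    mkJoin (k + 1) m h x β ∈ (SSet.Subcomplex.range (joinMapL A.ι B)).obj (op ⦋N⦌) ↔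
      x ∈ A.obj (op ⦋k⦌) := by
  refine mkJoin_mem_range_joinMapL_iff.trans ⟨?_, fun hx ↦ ⟨⟨x, hx⟩, rfl⟩⟩
  rintro ⟨α, rfl⟩
  exact α.2

lemma mkJoin_zero_mem_range_joinMapL (g : A ⟶ A') {h : 0 + m = N + 1} {α : Vec A' 0}
    {β : Vec B m} :
    mkJoin 0 m h α β ∈ (SSet.Subcomplex.range (joinMapL g B)).obj (op ⦋N⦌) :=
  mkJoin_mem_range_joinMapL_iff.2 ⟨α, rfl⟩

lemma vecMap_injective (g : A ⟶ A') [Mono g] : Function.Injective (VecMap g k) := by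
  cases k with
  | zero => exact fun _ _ _ ↦ rfl
  | succ k => exact (mono_iff_injective (g.app (op ⦋k⦌))).1 inferInstance

instance (g : A ⟶ A') [Mono g] : Mono (joinMapL g B) := by
  rw [NatTrans.mono_iff_mono_app]
  rintro ⟨N⟩
  induction N using SimplexCategory.rec with | _ N
  refine (mono_iff_injective _).2 fun p q hpq ↦ ?_
  obtain ⟨k, m, h, α, β, rfl⟩ := exists_mkJoin p
  obtain ⟨k', m', h', α', β', rfl⟩ := exists_mkJoin q
  rw [joinMapL_mkJoin, joinMapL_mkJoin] at hpq
  obtain ⟨hα, hβ⟩ := mkJoin_inj.1 hpq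
  obtain ⟨rfl, hα⟩ := Sigma.mk.inj hα
  obtain rfl := vecMap_injective g (eq_of_heq hα)
  exact mkJoin_inj.2 ⟨rfl, hβ⟩

end Range

section Pairing

lemma isUniquelyCodimOneFace_mkJoin {n k m : ℕ} (h : k + 2 + m = n + 2) (h' : k + 1 + m = n + 1)
    {x : A _⦋k + 1⦌} {y : A _⦋k⦌} (β : Vec B m)
    (hxy : SSet.S.IsUniquelyCodimOneFace (SSet.S.mk y) (SSet.S.mk x)) :
    SSet.S.IsUniquelyCodimOneFace (SSet.S.mk (X := Join A B) (mkJoin (k + 1) m h' y β))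
      (SSet.S.mk (mkJoin (k + 2) m h x β)) := by
  obtain ⟨i, rfl, hi⟩ := (SSet.S.IsUniquelyCodimOneFace.iff _ _).1 hxy
  refine (SSet.S.IsUniquelyCodimOneFace.iff _ _).2
    ⟨i.castLE (by omega), δ_mkJoin_left h i x β, fun j hj ↦ ?_⟩
  have hk : k + 2 ≤ n + 2 := by omega
  by_cases hjk : (j : ℕ) < k + 2
  · obtain ⟨i', rfl⟩ : ∃ i' : Fin (k + 2), j = i'.castLE hk := ⟨⟨j, hjk⟩, rfl⟩
    have faces_eq := (mkJoin_inj.1 ((δ_mkJoin_left h i' x β).symm.trans hj)).1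
    rw [hi i' (eq_of_heq (Sigma.mk.inj faces_eq).2)]
  · obtain ⟨l, rfl⟩ : ∃ l, m = l + 1 := ⟨m - 1, by omega⟩
    have hkl : k + 2 + (l + 1) ≤ n + 2 := h.le
    obtain ⟨i', rfl⟩ : ∃ i' : Fin (l + 1), j = (i'.natAdd (k + 2)).castLE hkl :=
      ⟨⟨j - (k + 2), by omega⟩, Fin.ext (by simp; omega)⟩
    dsimp only at hj
    have size_eq := congrArg Sigma.fst (mkJoin_inj.1 ((δ_mkJoin_right h i' x β).symm.trans hj)).1
    dsimp only at size_eq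
    omega

lemma lt_or_eq_of_mk_mkJoin_le {M N k k' m m' : ℕ} {h : k + 1 + m = N + 1}
    {h' : k' + 1 + m' = M + 1} {x : A _⦋k⦌} {β : Vec B m} {x' : A _⦋k'⦌} {β' : Vec B m'}
    (hp : mkJoin (k' + 1) m' h' x' β' ∈ (Join A B).nonDegenerate M)
    (hle : SSet.S.mk (X := Join A B) (mkJoin (k' + 1) m' h' x' β') ≤
      SSet.S.mk (mkJoin (k + 1) m h x β)) :
    m' < m ∨ (⟨m', β'⟩ : Σ m, Vec B m) = ⟨m, β⟩ ∧ SSet.S.mk x' ≤ SSet.S.mk x := by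
  obtain ⟨u, e⟩ := SSet.S.le_iff.1 hle
  have hu : Mono u := (Join A B).mono_of_nonDegenerate ⟨_, hp⟩ u _ e
  obtain ⟨u₁, u₂, hsum, rfl, rfl⟩ := exists_isOrdinalSum_of_map_mkJoin_eq (h := h) (h' := h') e
  obtain hlt | rfl := ((mkJoin_mem_nonDegenerate_iff.1 hp).2 u₂ β rfl).lt_or_eq
  · exact Or.inl hlt
  have hu₂ := hsum.injective_right h' (SimplexCategory.mono_iff_injective.1 hu)
  obtain rfl := OrderHom.eq_id_of_injective u₂ hu₂
  exact Or.inr ⟨congrArg _ (vecMapHom_id β), SSet.S.mk_map_le x (SimplexCategory.mkHom u₁)⟩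

variable {A : X.Subcomplex}

/-- The pairing core on `A ⋆ B ⊆ X ⋆ B` induced by one on `A ⊆ X`: for every nondegenerate, possibly
empty simplex `b` of `B`, the simplex `(x, b)` is paired with `(d_i x, b)` if `x` is paired with
`d_i x`. -/
def joinPairingCore (P : A.PairingCore) (B : SSet.{u}) :
    (SSet.Subcomplex.range (joinMapL A.ι B)).PairingCore where
  ι := P.ι × { b : Σ m, Vec B m // VecNonDegenerate b.2 }
  dim s := P.dim s.1 + s.2.1.1
  simplex s := mkJoin (P.dim s.1 + 2) s.2.1.1 (by omega) (P.simplex s.1) s.2.1.2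
  index s := (P.index s.1).castLE (by omega)
  nonDegenerate₁ s := mkJoin_mem_nonDegenerate_iff.2
    ⟨vecNonDegenerate_succ_iff.2 (P.nonDegenerate₁ s.1), s.2.2⟩
  nonDegenerate₂ s := by
    rw [δ_mkJoin_left]
    exact mkJoin_mem_nonDegenerate_iff.2
      ⟨vecNonDegenerate_succ_iff.2 (P.nonDegenerate₂ s.1), s.2.2⟩
  notMem₁ s := mkJoin_succ_mem_range_joinMapL_ι_iff.not.2 (P.notMem₁ s.1)
  notMem₂ s := by
    rw [δ_mkJoin_left]
    exact mkJoin_succ_mem_range_joinMapL_ι_iff.not.2 (P.notMem₂ s.1)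
  injective_type₁' e :=
    have ⟨hx, hb⟩ := mk_mkJoin_eq_iff.1 e
    Prod.ext (P.injective_type₁' hx) (Subtype.ext hb)
  injective_type₂' e := by
    rw [δ_mkJoin_left, δ_mkJoin_left] at e
    obtain ⟨hx, hb⟩ := mk_mkJoin_eq_iff.1 e
    exact Prod.ext (P.injective_type₂' hx) (Subtype.ext hb)
  type₁_ne_type₂' s t e := by
    rw [δ_mkJoin_left] at e
    exact P.type₁_ne_type₂' s.1 t.1 (mk_mkJoin_eq_iff.1 e).1
  surjective' x := by
    obtain ⟨N, p, hp, hpA, rfl⟩ := x.mk_surjective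
    obtain ⟨k, m, h, α, β, rfl⟩ := exists_mkJoin p
    obtain ⟨hα, hβ⟩ := mkJoin_mem_nonDegenerate_iff.1 hp
    cases k with
    | zero => exact absurd (mkJoin_zero_mem_range_joinMapL A.ι) hpA
    | succ k =>
      obtain ⟨s, hs⟩ := P.surjective' (.mk α (vecNonDegenerate_succ_iff.1 hα)
        (mkJoin_succ_mem_range_joinMapL_ι_iff.not.1 hpA))
      refine ⟨⟨s, ⟨m, β⟩, hβ⟩, hs.imp (fun e ↦ mk_mkJoin_eq_iff.2 ⟨e, rfl⟩) fun e ↦ ?_⟩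
      rw [δ_mkJoin_left]
      exact mk_mkJoin_eq_iff.2 ⟨e, rfl⟩

variable (P : A.PairingCore)

lemma toS_type₂_joinPairingCore (s : P.ι) (b : { b : Σ m, Vec B m // VecNonDegenerate b.2 }) :
    ((joinPairingCore P B).type₂ (s, b)).toS = SSet.S.mk (X := Join X B) (dim := P.dim s + b.1.1)
      (mkJoin (P.dim s + 1) b.1.1 (by omega) (X.δ (P.index s) (P.simplex s)) b.1.2) :=
  have h : P.dim s + 2 + b.1.1 = P.dim s + b.1.1 + 2 := by omega
  congrArg (fun p ↦ SSet.S.mk (X := Join X B) p) (δ_mkJoin_left h (P.index s) (P.simplex s) b.1.2)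

instance [P.IsProper] : (joinPairingCore P B).IsProper where
  isUniquelyCodimOneFace := fun (s, b) ↦ by
    rw [toS_type₂_joinPairingCore]
    exact isUniquelyCodimOneFace_mkJoin (n := P.dim s + b.1.1) (by omega) (by omega) b.1.2
      (P.isUniquelyCodimOneFace s)

lemma lt_or_ancestralRel {s t : (joinPairingCore P B).ι}
    (hst : (joinPairingCore P B).AncestralRel s t) :
    s.2.1.1 < t.2.1.1 ∨ s.2.1.1 = t.2.1.1 ∧ P.AncestralRel s.1 t.1 := by
  have hle := (toS_type₂_joinPairingCore P s.1 s.2).ge.trans hst.2.le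
  have dim_eq : P.dim t.1 + 2 + t.2.1.1 = P.dim t.1 + t.2.1.1 + 2 := by omega
  obtain hlt | ⟨hb, hle⟩ := lt_or_eq_of_mk_mkJoin_le (h := dim_eq) (mkJoin_mem_nonDegenerate_iff.2
    ⟨vecNonDegenerate_succ_iff.2 (P.nonDegenerate₂ s.1), s.2.2⟩) hle
  · exact Or.inl hlt
  · exact Or.inr ⟨congrArg Sigma.fst hb, fun h ↦ hst.1 (Prod.ext h (Subtype.ext hb)),
      lt_of_le_of_ne hle (P.type₁_ne_type₂ t.1 s.1).symm⟩

instance [P.IsRegular] : (joinPairingCore P B).IsRegular where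
  wf := Subrelation.wf (fun hst ↦ Prod.lex_def.2 (lt_or_ancestralRel P hst))
    (InvImage.wf (fun s ↦ (s.2.1.1, s.1))
      (WellFounded.prod_lex Nat.lt_wfRel.wf (SSet.Subcomplex.PairingCore.IsRegular.wf P)))

instance [P.IsInner] : (joinPairingCore P B).IsInner where
  ne_zero s e := SSet.Subcomplex.PairingCore.IsInner.ne_zero s.1 (Fin.ext (Fin.mk.inj e))
  ne_last s e := by
    have index_ne := Fin.val_ne_of_ne (SSet.Subcomplex.PairingCore.IsInner.ne_last s.1)
    have index_eq : (P.index s.1 : ℕ) = P.dim s.1 + s.2.1.1 + 1 := Fin.mk.inj e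
    have := (P.index s.1).isLt
    rw [Fin.val_last] at index_ne
    omega

lemma innerAnodyneExtensions_joinMapL [P.IsRegular] [P.IsInner] :
    SSet.innerAnodyneExtensions (joinMapL A.ι B) :=
  SSet.strongInnerAnodyneExtensions_le_innerAnodyneExtensions _
    ⟨inferInstance, (joinPairingCore P B).pairing, inferInstance, inferInstance⟩

end Pairing

section Horn

variable {n : ℕ}

lemma eq_id_or_eq_δ_of_notMem_horn {k : ℕ} {i : Fin (n + 2)} (f : ⦋k⦌ ⟶ ⦋n + 1⦌) [Mono f]
    (hf : SSet.stdSimplex.objEquiv.symm f ∉ Λ[n + 1, i].obj (op ⦋k⦌)) :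
    (⟨k, f⟩ : Σ k : ℕ, (⦋k⦌ ⟶ ⦋n + 1⦌)) = ⟨n + 1, 𝟙 _⟩ ∨
      (⟨k, f⟩ : Σ k : ℕ, (⦋k⦌ ⟶ ⦋n + 1⦌)) = ⟨n, SimplexCategory.δ i⟩ := by
  have le_dim : n ≤ k := by
    by_contra! hk
    exact hf (by rw [SSet.horn_obj_eq_univ i k (by omega)]; trivial)
  have dim_le : k ≤ n + 1 := SimplexCategory.len_le_of_mono f
  obtain rfl | rfl : k = n + 1 ∨ k = n := by omega
  · exact Or.inl (congrArg _ (SimplexCategory.eq_id_of_mono f))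
  · obtain ⟨j, rfl⟩ := SimplexCategory.eq_δ_of_mono f
    exact Or.inr (by rw [(SSet.objEquiv_symm_δ_notMem_horn_iff j i).1 hf])

/-- The pairing core of a horn inclusion, which pairs the top simplex of `Δ[n + 1]` with its
`i`-th face. -/
def hornPairingCore (i : Fin (n + 2)) : (Λ[n + 1, i] : Δ[n + 1].Subcomplex).PairingCore where
  ι := Unit
  dim _ := n
  simplex _ := universalSimplex (n + 1)
  index _ := i
  nonDegenerate₁ _ := (SSet.stdSimplex.objEquiv_symm_mem_nonDegenerate_iff_mono _).2 inferInstance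
  nonDegenerate₂ _ :=
    (SSet.stdSimplex.objEquiv_symm_mem_nonDegenerate_iff_mono (SimplexCategory.δ i)).2 inferInstance
  notMem₁ _ := SSet.objEquiv_symm_notMem_horn_of_isIso i _
  notMem₂ _ := (SSet.objEquiv_symm_δ_notMem_horn_iff i i).2 rfl
  injective_type₁' _ := rfl
  injective_type₂' _ := rfl
  type₁_ne_type₂' _ _ e := by
    have := SSet.S.dim_eq_of_mk_eq e
    omega
  surjective' x := by
    obtain ⟨k, x, hx, hxi, rfl⟩ := x.mk_surjective
    obtain ⟨f, rfl⟩ := SSet.stdSimplex.objEquiv.symm.surjective x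
    have := (SSet.stdSimplex.objEquiv_symm_mem_nonDegenerate_iff_mono f).1 hx
    let toS (g : Σ k : ℕ, (⦋k⦌ ⟶ ⦋n + 1⦌)) : (Δ[n + 1] : SSet.{u}).S :=
      SSet.S.mk (SSet.stdSimplex.objEquiv.symm g.2)
    exact ⟨(), (eq_id_or_eq_δ_of_notMem_horn f hxi).imp (congrArg toS) (congrArg toS)⟩

instance (i : Fin (n + 2)) : (hornPairingCore.{u} i).IsRegular where
  wf := ⟨fun _ ↦ ⟨_, fun _ h ↦ absurd rfl h.1⟩⟩

lemma isInner_hornPairingCore {i : Fin (n + 2)} (h0 : 0 < i) (hn : i < Fin.last (n + 1)) :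
    (hornPairingCore.{u} i).IsInner where
  ne_zero _ := h0.ne'
  ne_last _ := hn.ne

end Horn

theorem overcategory_is_quasicategory_general (C B : SSet.{u}) [SSet.Quasicategory C]
    (D : B ⟶ C) : SSet.Quasicategory (Overcategory C B D) where
  hornFilling' _ i σ₀ h0 hn := by
    have := isInner_hornPairingCore h0 hn
    obtain ⟨σ, hσ⟩ := exists_comp_eq_of_innerAnodyneExtensions_joinMapL
      (innerAnodyneExtensions_joinMapL (hornPairingCore i)) σ₀
    exact ⟨σ, hσ.symm⟩

end SSetPaper

/-!
STATEMENT 12: Let `C` be a quasicategory, `B` a simplicial set, and `D : B → C` a map of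
simplicial sets (a diagram in `C` indexed by `B`).  Then the overcategory `C_{/D}`, whose
`n`-simplices are the maps `Δ[n] ⋆ B → C` restricting to `D` on `B`, is a quasicategory.
-/

open SSetPaper in
theorem overcategory_is_quasicategory
    (C : SSet.{0}) [SSet.Quasicategory C] (B : SSet.{0}) (D : B ⟶ C) :
    SSet.Quasicategory (Overcategory C B D) :=
  overcategory_is_quasicategory_general C B D
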